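/- arXiv:2107.08409 — 3 statements merged into one kernel-verified Lean document; each statement's English description precedes it below -/
import Mathlib

section
/- For any first-order language L, the relation 'is strictly more general than' on terms is well-founded: there is no infinite sequence of terms t₀, t₁, t₂, … in L.Term ℕ such that each t_{n+1} is strictly more general than t_n. Formally, the relation r s t := ((∃ θ : ℕ → L.Term ℕ, t = s.subst θ) ∧ ¬ (∃ ρ : ℕ → L.Term ℕ, s = t.subst ρ)) is a well-founded relation on L.Term ℕ. -/
/-!
Substitution never removes function symbols. If it adds none, it renames the variables of the term,
which preserves the number of variable occurrences; such a renaming can be undone exactly when it is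
injective on the variables that occur, and otherwise it lowers the number of distinct variables.
Hence passing to a proper instance increases, lexicographically, the number of function symbols and
then the number of repeated variable occurrences.
-/

namespace TermComplexity

open FirstOrder Language

variable {L : FirstOrder.Language} {α β : Type*}

/-- The number of occurrences of function symbols (constants included) in a term: the part of the
complexity that a substitution can only increase. -/
def funcCount : L.Term α → ℕ
  | .var _ => 0
  | .func _ ts => 1 + ∑ i, funcCount (ts i)

/-- The number of variable occurrences in a term, counted with multiplicity. It is invariant under
renaming of variables and bounds the number of distinct variables. -/
def varCount : L.Term α → ℕ
  | .var _ => 1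
  | .func _ ts => ∑ i, varCount (ts i)

/-- The number of variable occurrences in excess of the number of distinct variables, which measures
how far a term is from being linear. The subtraction never truncates, by `card_varFinset_le`. -/
def varRepetitions [DecidableEq α] (t : L.Term α) : ℕ :=
  varCount t - t.varFinset.card

/-- The rank of a term used for well-foundedness: function symbols first, then repetitions of
variables, ordered lexicographically. -/
def complexity [DecidableEq α] (t : L.Term α) : ℕ ×ₗ ℕ :=
  toLex (funcCount t, varRepetitions t)

theorem subst_eq_relabel [DecidableEq α] {s : L.Term α} {θ : α → L.Term β} {g : α → β}
    (h : ∀ x ∈ s.varFinset, θ x = .var (g x)) : s.subst θ = s.relabel g := by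
  induction s with
  | var x => exact h x (by simp)
  | func f ts ih =>
    simp only [Term.subst, Term.relabel]
    congr 1
    funext i
    exact ih i fun x hx => h x (Finset.mem_biUnion.2 ⟨i, Finset.mem_univ i, hx⟩)

theorem subst_of_isEmpty [IsEmpty α] (s : L.Term α) (θ : α → L.Term α) : s.subst θ = s := by
  classical
  rw [subst_eq_relabel (g := id) fun x => isEmptyElim x, Term.relabel_id]

theorem relabel_congr [DecidableEq α] {s : L.Term α} {f g : α → β}
    (h : Set.EqOn f g s.varFinset) : s.relabel f = s.relabel g := calc
  s.relabel f = s.subst fun x => .var (f x) := (subst_eq_relabel fun _ _ => rfl).symm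
  _ = s.relabel g := subst_eq_relabel fun _ hx => congrArg Term.var (h hx)

theorem varFinset_relabel [DecidableEq α] [DecidableEq β] (s : L.Term α) (g : α → β) :
    (s.relabel g).varFinset = s.varFinset.image g := by
  induction s with
  | var x => simp
  | func f ts ih => simp only [Term.relabel, Term.varFinset, ih, Finset.biUnion_image]

theorem varCount_relabel (s : L.Term α) (g : α → β) : varCount (s.relabel g) = varCount s := by
  induction s with
  | var x => rfl
  | func f ts ih => simp only [Term.relabel, varCount, ih]

theorem card_varFinset_le [DecidableEq α] (s : L.Term α) : s.varFinset.card ≤ varCount s := by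
  induction s with
  | var x => simp [varCount]
  | func f ts ih => exact Finset.card_biUnion_le.trans (Finset.sum_le_sum fun i _ => ih i)

theorem relabel_relabel_invFunOn [DecidableEq α] [Nonempty α] {s : L.Term α} {g : α → β}
    (hg : Set.InjOn g s.varFinset) :
    (s.relabel g).relabel (Function.invFunOn g s.varFinset) = s := by
  have left_inverse : Set.EqOn (Function.invFunOn g s.varFinset ∘ g) id s.varFinset :=
    hg.leftInvOn_invFunOn
  rw [Term.relabel_relabel, relabel_congr left_inverse, Term.relabel_id]

theorem varRepetitions_lt_relabel [DecidableEq α] [DecidableEq β] {s : L.Term α} {g : α → β}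
    (hg : ¬ Set.InjOn g s.varFinset) : varRepetitions s < varRepetitions (s.relabel g) := by
  have card_image_lt : (s.varFinset.image g).card < s.varFinset.card :=
    Finset.card_image_le.lt_of_ne (mt Finset.card_image_iff.1 hg)
  rw [varRepetitions, varRepetitions, varCount_relabel, varFinset_relabel]
  exact Nat.sub_lt_sub_left (card_image_lt.trans_le (card_varFinset_le s)) card_image_lt

theorem funcCount_le_subst (s : L.Term α) (θ : α → L.Term β) :
    funcCount s ≤ funcCount (s.subst θ) := by
  induction s with
  | var x => exact Nat.zero_le _
  | func _ ts ih => exact Nat.add_le_add_left (Finset.sum_le_sum fun i _ => ih i) 1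

theorem exists_eq_var_of_funcCount_eq_zero {t : L.Term α} (h : funcCount t = 0) :
    ∃ x, t = .var x := by
  cases t with
  | var x => exact ⟨x, rfl⟩
  | func f ts => simp [funcCount] at h

theorem exists_eq_var_of_funcCount_eq_subst [DecidableEq α] {s : L.Term α} {θ : α → L.Term β}
    (h : funcCount s = funcCount (s.subst θ)) : ∀ x ∈ s.varFinset, ∃ y, θ x = .var y := by
  induction s with
  | var x =>
    simp only [Term.varFinset, Finset.mem_singleton, forall_eq]
    exact exists_eq_var_of_funcCount_eq_zero h.symm
  | func f ts ih =>
    have funcCount_eq : ∀ i ∈ Finset.univ, funcCount (ts i) = funcCount ((ts i).subst θ) :=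
      (Finset.sum_eq_sum_iff_of_le fun i _ => funcCount_le_subst (ts i) θ).1 (Nat.add_left_cancel h)
    intro x hx
    obtain ⟨i, hi, hx⟩ := Finset.mem_biUnion.1 hx
    exact ih i (funcCount_eq i hi) x hx

theorem exists_subst_eq_relabel [Nonempty β] {s : L.Term α} {θ : α → L.Term β}
    (h : funcCount s = funcCount (s.subst θ)) : ∃ g : α → β, s.subst θ = s.relabel g := by
  classical
  choose! g hg using exists_eq_var_of_funcCount_eq_subst h
  exact ⟨g, subst_eq_relabel hg⟩

theorem complexity_lt_subst [DecidableEq α] [DecidableEq β] [Nonempty α] [Nonempty β]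
    {s : L.Term α} {θ : α → L.Term β} (h : ¬ ∃ ρ : β → L.Term α, s = (s.subst θ).subst ρ) :
    complexity s < complexity (s.subst θ) := by
  rw [complexity, complexity, Prod.Lex.toLex_lt_toLex]
  refine (funcCount_le_subst s θ).lt_or_eq.imp_right fun funcCount_eq => ⟨funcCount_eq, ?_⟩
  obtain ⟨g, hg⟩ := exists_subst_eq_relabel funcCount_eq
  rw [hg] at h ⊢
  refine varRepetitions_lt_relabel fun hinj => h ?_
  refine ⟨fun y => .var (Function.invFunOn g s.varFinset y), ?_⟩
  rw [subst_eq_relabel fun _ _ => rfl, relabel_relabel_invFunOn hinj]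

end TermComplexity

theorem strictlyMoreGeneral_wellFounded_general (L : FirstOrder.Language) (α : Type*) :
    WellFounded (fun s t : L.Term α =>
      (∃ θ : α → L.Term α, t = s.subst θ) ∧ ¬ (∃ ρ : α → L.Term α, s = t.subst ρ)) := by
  classical
  refine Subrelation.wf ?_ (InvImage.wf TermComplexity.complexity wellFounded_lt)
  rintro s _ ⟨⟨θ, rfl⟩, not_instance⟩
  cases isEmpty_or_nonempty α with
  | inl _ => exact absurd ⟨θ, by simp only [TermComplexity.subst_of_isEmpty]⟩ not_instance
  | inr _ => exact TermComplexity.complexity_lt_subst not_instance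

/-- The relation "is strictly more general than" on first-order terms is well-founded:
there is no infinite sequence of terms each strictly more general than the previous one. -/
theorem strictlyMoreGeneral_wellFounded (L : FirstOrder.Language) :
    WellFounded (fun s t : L.Term ℕ =>
      (∃ θ : ℕ → L.Term ℕ, t = s.subst θ) ∧ ¬ (∃ ρ : ℕ → L.Term ℕ, s = t.subst ρ)) :=
  strictlyMoreGeneral_wellFounded_general L ℕ
end

section
/- If ≻ is an irreflexive and transitive relation on ground terms L.Term Empty, then the closure ordering ≻_tc is an irreflexive and transitive relation on ground term closures (pairs (t, σ) with t : L.Term ℕ and σ : ℕ → L.Term Empty). -/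
/-!
Substitutions compose, so being an instance is a transitive relation on terms, and the proper
instance relation is its strict part. The closure ordering compares `(t, σ)` by the pair
`(t.subst σ, t)`, lexicographically in `≻` and the proper instance relation; lexicographic products
and preimages preserve irreflexivity and transitivity.
-/

namespace ClosureOrder

variable {L : FirstOrder.Language}

/-- `s` is an instance of `t`. -/
def IsInstance (s t : L.Term ℕ) : Prop :=
  ∃ θ : ℕ → L.Term ℕ, s = t.subst θ

/-- `s` is a proper instance of `t` (equivalently, `t` is strictly more general than `s`). -/
def ProperInstance (s t : L.Term ℕ) : Prop :=
  IsInstance s t ∧ ¬ IsInstance t s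

/-- The closure ordering `≻_tc` on ground term closures induced by a relation `r` (`≻`)
on ground terms: `(s, σ) ≻_tc (t, ρ)` iff `s.subst σ ≻ t.subst ρ`, or
`s.subst σ = t.subst ρ` and `s` is a proper instance of `t`. -/
def ClosGT (r : L.Term Empty → L.Term Empty → Prop)
    (c d : L.Term ℕ × (ℕ → L.Term Empty)) : Prop :=
  r (c.1.subst c.2) (d.1.subst d.2) ∨
    (c.1.subst c.2 = d.1.subst d.2 ∧ ProperInstance c.1 d.1)

theorem subst_subst {α β γ : Type*} (t : L.Term α) (θ : α → L.Term β) (η : β → L.Term γ) :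
    (t.subst θ).subst η = t.subst fun i ↦ (θ i).subst η := by
  induction t with
  | var => rfl
  | func f ts ih => simp only [FirstOrder.Language.Term.subst, ih]

theorem IsInstance.trans {s t u : L.Term ℕ} (hst : IsInstance s t) (htu : IsInstance t u) :
    IsInstance s u := by
  obtain ⟨θ, rfl⟩ := hst
  obtain ⟨η, rfl⟩ := htu
  exact ⟨fun i ↦ (η i).subst θ, subst_subst u η θ⟩

theorem ProperInstance.irrefl (s : L.Term ℕ) : ¬ ProperInstance s s :=
  fun h ↦ h.2 h.1

theorem ProperInstance.trans {s t u : L.Term ℕ} (hst : ProperInstance s t)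
    (htu : ProperInstance t u) : ProperInstance s u :=
  ⟨hst.1.trans htu.1, fun hus ↦ htu.2 (hus.trans hst.1)⟩

instance ProperInstance.instIsStrictOrder :
    IsStrictOrder (L.Term ℕ) ProperInstance where
  irrefl := ProperInstance.irrefl
  trans _ _ _ := ProperInstance.trans

theorem closGT_eq_preimage_lex (r : L.Term Empty → L.Term Empty → Prop) :
    ClosGT r = (fun c ↦ (c.1.subst c.2, c.1)) ⁻¹'o Prod.Lex r ProperInstance := by
  ext c d
  simp only [ClosGT, Order.Preimage, Prod.lex_iff]

instance ClosGT.instIrrefl (r : L.Term Empty → L.Term Empty → Prop) [Std.Irrefl r] :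
    Std.Irrefl (ClosGT r) := by
  rw [closGT_eq_preimage_lex]
  infer_instance

instance ClosGT.instIsTrans (r : L.Term Empty → L.Term Empty → Prop)
    [IsTrans (L.Term Empty) r] : IsTrans (L.Term ℕ × (ℕ → L.Term Empty)) (ClosGT r) := by
  rw [closGT_eq_preimage_lex]
  infer_instance

/-- If `≻` is irreflexive and transitive on ground terms, then the closure ordering `≻_tc`
is irreflexive and transitive on ground term closures. -/
theorem closGT_irrefl_trans (r : L.Term Empty → L.Term Empty → Prop)
    (hirr : ∀ x, ¬ r x x) (htrans : ∀ {a b c}, r a b → r b c → r a c) :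
    (∀ c : L.Term ℕ × (ℕ → L.Term Empty), ¬ ClosGT r c c) ∧
      (∀ c d e : L.Term ℕ × (ℕ → L.Term Empty),
        ClosGT r c d → ClosGT r d e → ClosGT r c e) := by
  have : Std.Irrefl r := ⟨hirr⟩
  have : IsTrans (L.Term Empty) r := ⟨fun _ _ _ ↦ htrans⟩
  exact ⟨irrefl_of (ClosGT r), fun _ _ _ ↦ trans_of (ClosGT r)⟩

end ClosureOrder
end

section
/- (Non-totality of the closure ordering.) Let L be the first-order language with one binary function symbol f and two constant symbols a and b. Consider the two ground term closures c₁ = (f(x₀, b), σ₁) where σ₁ maps every variable to a, and c₂ = (f(a, x₀), σ₂) where σ₂ maps every variable to b. Then c₁ and c₂ represent the same ground term f(a, b), their term components are distinct, and for every irreflexive relation ≻ on ground terms, neither c₁ ≻_tc c₂ nor c₂ ≻_tc c₁ holds. -/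
/-!
Two closures that represent the same ground term can only be compared in `≻_tc` through the
instance relation on their term components, whatever irreflexive `≻` is. Instances of a term
`f(t₁, t₂)` have the form `f(s₁, s₂)` with each `sᵢ` an instance of `tᵢ`, and a variable is never an
instance of a constant. So the first arguments of `f(x₀, b)` and `f(a, x₀)` rule out one direction
and the second arguments the other.
-/

namespace ClosureOrderEx

/-- Function symbols: a binary `f` and constants `a`, `b`. -/
inductive Fns : ℕ → Type
  | f : Fns 2
  | a : Fns 0
  | b : Fns 0

/-- The language with one binary function symbol `f` and two constants `a`, `b`. -/
def L : FirstOrder.Language :=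
  ⟨Fns, fun _ => Empty⟩

open FirstOrder Language

/-- The ground term `a`. -/
def aG : L.Term Empty := Term.func Fns.a ![]

/-- The ground term `b`. -/
def bG : L.Term Empty := Term.func Fns.b ![]

/-- The ground term `f(a, b)`. -/
def fab : L.Term Empty := Term.func Fns.f ![aG, bG]

/-- `s` is an instance of `t`. -/
def IsInstance (s t : L.Term ℕ) : Prop :=
  ∃ θ : ℕ → L.Term ℕ, s = t.subst θ

/-- `s` is a proper instance of `t`. -/
def ProperInstance (s t : L.Term ℕ) : Prop :=
  IsInstance s t ∧ ¬ IsInstance t s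

/-- The closure ordering `≻_tc` on ground term closures induced by a relation `r` (`≻`)
on ground terms. -/
def ClosGT (r : L.Term Empty → L.Term Empty → Prop)
    (c d : L.Term ℕ × (ℕ → L.Term Empty)) : Prop :=
  r (c.1.subst c.2) (d.1.subst d.2) ∨
    (c.1.subst c.2 = d.1.subst d.2 ∧ ProperInstance c.1 d.1)

/-- The closure `(f(x₀, b), σ₁)` where `σ₁` maps every variable to `a`. -/
def c₁ : L.Term ℕ × (ℕ → L.Term Empty) :=
  (Term.func Fns.f ![Term.var 0, bG.relabel Empty.elim], fun _ => aG)

/-- The closure `(f(a, x₀), σ₂)` where `σ₂` maps every variable to `b`. -/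
def c₂ : L.Term ℕ × (ℕ → L.Term Empty) :=
  (Term.func Fns.f ![aG.relabel Empty.elim, Term.var 0], fun _ => bG)

section Substitution

variable {𝓛 : Language} {α β γ : Type*}

theorem subst_relabel (t : 𝓛.Term α) (g : α → β) (σ : β → 𝓛.Term γ) :
    (t.relabel g).subst σ = t.subst (σ ∘ g) := by
  induction t with
  | var x => rfl
  | func F ts ih => exact congrArg (Term.func F) (funext ih)

theorem subst_var (t : 𝓛.Term α) : t.subst Term.var = t := by
  induction t with
  | var x => rfl
  | func F ts ih => exact congrArg (Term.func F) (funext ih)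

theorem subst_relabel_of_isEmpty [IsEmpty α] (t : 𝓛.Term α) (g : α → β) (σ : β → 𝓛.Term α) :
    (t.relabel g).subst σ = t := by
  rw [subst_relabel, Subsingleton.elim (σ ∘ g) Term.var, subst_var]

theorem subst_func_pair (F : 𝓛.Functions 2) (s t : 𝓛.Term α) (σ : α → 𝓛.Term β) :
    (Term.func F ![s, t]).subst σ = Term.func F ![s.subst σ, t.subst σ] :=
  congrArg (Term.func F) (funext (Fin.forall_fin_two.mpr ⟨rfl, rfl⟩))

end Substitution

namespace IsInstance

theorem refl (t : L.Term ℕ) : IsInstance t t :=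
  ⟨Term.var, (subst_var t).symm⟩

theorem apply_of_func {n : ℕ} {F : L.Functions n} {u v : Fin n → L.Term ℕ}
    (h : IsInstance (Term.func F u) (Term.func F v)) (i : Fin n) : IsInstance (u i) (v i) := by
  obtain ⟨θ, hθ⟩ := h
  injection hθ with _ _ huv
  exact ⟨θ, congrFun huv i⟩

end IsInstance

theorem not_isInstance_var_func {n : ℕ} (x : ℕ) (F : L.Functions n) (v : Fin n → L.Term ℕ) :
    ¬ IsInstance (Term.var x) (Term.func F v) :=
  fun ⟨_, hθ⟩ => nomatch hθ

theorem closGT_iff_properInstance {r : L.Term Empty → L.Term Empty → Prop} (hr : ∀ x, ¬ r x x)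
    {c d : L.Term ℕ × (ℕ → L.Term Empty)} (hcd : c.1.subst c.2 = d.1.subst d.2) :
    ClosGT r c d ↔ ProperInstance c.1 d.1 := by
  simp [ClosGT, hcd, hr]

theorem subst_c₁ : c₁.1.subst c₁.2 = fab :=
  calc c₁.1.subst c₁.2
    _ = Term.func Fns.f ![aG, (bG.relabel Empty.elim).subst c₁.2] := subst_func_pair ..
    _ = fab := congrArg (fun t => Term.func Fns.f ![aG, t]) (subst_relabel_of_isEmpty ..)

theorem subst_c₂ : c₂.1.subst c₂.2 = fab :=
  calc c₂.1.subst c₂.2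
    _ = Term.func Fns.f ![(aG.relabel Empty.elim).subst c₂.2, bG] := subst_func_pair ..
    _ = fab := congrArg (fun t => Term.func Fns.f ![t, bG]) (subst_relabel_of_isEmpty ..)

theorem not_isInstance_c₁_c₂ : ¬ IsInstance c₁.1 c₂.1 :=
  fun h => not_isInstance_var_func 0 _ _ (h.apply_of_func 0)

theorem not_isInstance_c₂_c₁ : ¬ IsInstance c₂.1 c₁.1 :=
  fun h => not_isInstance_var_func 0 _ _ (h.apply_of_func 1)

/-- Non-totality of the closure ordering: `c₁` and `c₂` represent the same ground term
`f(a, b)`, have distinct term components, and are incomparable in `≻_tc` for every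
irreflexive relation `≻` on ground terms. -/
theorem closGT_not_total :
    c₁.1.subst c₁.2 = fab ∧ c₂.1.subst c₂.2 = fab ∧ c₁.1 ≠ c₂.1 ∧
      ∀ r : L.Term Empty → L.Term Empty → Prop, (∀ x, ¬ r x x) →
        ¬ ClosGT r c₁ c₂ ∧ ¬ ClosGT r c₂ c₁ := by
  refine ⟨subst_c₁, subst_c₂, fun h => not_isInstance_c₁_c₂ (h ▸ IsInstance.refl c₁.1),
    fun r hr => ?_⟩
  have same_ground : c₁.1.subst c₁.2 = c₂.1.subst c₂.2 := subst_c₁.trans subst_c₂.symm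
  rw [closGT_iff_properInstance hr same_ground, closGT_iff_properInstance hr same_ground.symm]
  exact ⟨fun h => not_isInstance_c₁_c₂ h.1, fun h => not_isInstance_c₂_c₁ h.1⟩

end ClosureOrderEx
end
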